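/- (Conjugate invariance) Let I, J ⊆ Δ and suppose Φ_I and Φ_J are W-conjugate; choose w ∈ W with Φ_J ∩ Φ⁺ = w(Φ_I ∩ Φ⁺). Then for all λ, μ ∈ Λ_I⁺ (so that wλ, wμ ∈ Λ_J⁺): c̃(λ, μ, Φ_I, Φ) = c̃(wλ, wμ, Φ_J, Φ). -/

import Mathlib

open scoped RealInnerProductSpace
open Classical

noncomputable section

namespace JantzenGVM

variable {V : Type*} [NormedAddCommGroup V] [InnerProductSpace ℝ V] [FiniteDimensional ℝ V]

/-- The coroot `α^∨ = 2α/⟨α,α⟩` of a vector `α` (junk value `0` when `α = 0`). -/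
def coroot (α : V) : V := (2 / ⟪α, α⟫) • α

/-- The linear functional `v ↦ ⟨v, α^∨⟩`. -/
def corootForm (α : V) : V →ₗ[ℝ] ℝ where
  toFun v := ⟪v, coroot α⟫
  map_add' x y := by simp [inner_add_left]
  map_smul' c x := by simp [inner_smul_left]

lemma corootForm_self {α : V} (h : ⟪α, α⟫ ≠ 0) : corootForm α α = 2 := by
  simp only [corootForm, coroot, LinearMap.coe_mk, AddHom.coe_mk, real_inner_smul_right]
  field_simp

/-- The reflection `s_α` as a linear automorphism of `V` (the identity when `⟨α,α⟩ = 0`). -/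
def reflV (α : V) : V ≃ₗ[ℝ] V :=
  if h : ⟪α, α⟫ = 0 then LinearEquiv.refl ℝ V
  else Module.reflection (corootForm_self h)

/-- `h* = ℂ ⊗ V`, realized as the space of real-linear functionals `V → ℂ` via the
inner product; an element `λ` pairs with a root `α` by `⟨λ, α⟩ = λ α` and with the
coroot by `⟨λ, α^∨⟩ = λ (coroot α)`. -/
abbrev HStar (V : Type*) [NormedAddCommGroup V] [InnerProductSpace ℝ V] := V →ₗ[ℝ] ℂ

/-- The canonical embedding of `V` into `h*`. -/
def emb (α : V) : HStar V where
  toFun v := (⟪α, v⟫ : ℂ)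
  map_add' x y := by simp [inner_add_right]
  map_smul' c x := by simp [inner_smul_right, Complex.real_smul]

/-- The action of a linear automorphism `w` of `V` on `h*`: `(w • λ)(v) = λ(w⁻¹ v)`. -/
def wAct (w : V ≃ₗ[ℝ] V) (l : HStar V) : HStar V := l ∘ₗ (w.symm : V →ₗ[ℝ] V)

/-- The reflection `s_β λ = λ - ⟨λ, β^∨⟩ β` acting on `h*`. -/
def sRefl (β : V) (l : HStar V) : HStar V := l - l (coroot β) • emb β

/-- The group generated by the reflections in the elements of `Φ'`. -/
def weyl (Φ' : Set V) : Subgroup (V ≃ₗ[ℝ] V) :=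
  Subgroup.closure {w | ∃ α ∈ Φ', w = reflV α}

/-- A finite, reduced, crystallographic root system spanning the Euclidean space `V`,
together with a choice of positive system and the corresponding simple system. -/
structure RootSys (V : Type*) [NormedAddCommGroup V] [InnerProductSpace ℝ V]
    [FiniteDimensional ℝ V] where
  Φ : Finset V
  pos : Finset V
  Δ : Finset V
  ne_zero : ∀ α ∈ Φ, α ≠ (0 : V)
  span_eq_top : Submodule.span ℝ (Φ : Set V) = ⊤
  reduced : ∀ α ∈ Φ, ∀ c : ℝ, c • α ∈ Φ → c = 1 ∨ c = -1
  refl_mem : ∀ α ∈ Φ, ∀ β ∈ Φ, reflV α β ∈ Φ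
  crystallographic : ∀ α ∈ Φ, ∀ β ∈ Φ, ∃ n : ℤ, ⟪β, coroot α⟫ = (n : ℝ)
  pos_subset : pos ⊆ Φ
  mem_pos_or : ∀ α ∈ Φ, α ∈ pos ∨ -α ∈ pos
  not_both : ∀ α ∈ pos, -α ∉ pos
  simple_subset : Δ ⊆ pos
  simple_indep : LinearIndependent ℝ (fun x : {a : V // a ∈ Δ} => x.1)
  simple_gen : ∀ β ∈ pos, ∃ c : V → ℝ, (∀ α ∈ Δ, 0 ≤ c α) ∧ β = ∑ α ∈ Δ, c α • α

/-- A subsystem of the root system: a subset of `Φ` closed under its own reflections. -/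
def IsSubsystem (S : RootSys V) (Φ' : Set V) : Prop :=
  Φ' ⊆ (S.Φ : Set V) ∧ ∀ α ∈ Φ', ∀ β ∈ Φ', reflV α β ∈ Φ'

/-- The length of `w`, i.e. the number of positive roots sent to negative roots
(this equals the Coxeter length for elements of the Weyl group). -/
def len (S : RootSys V) (w : V ≃ₗ[ℝ] V) : ℕ :=
  {β ∈ (S.pos : Set V) | w β ∉ (S.pos : Set V)}.ncard

/-- `Φ_I = ℤI ∩ Φ`, the subsystem generated by a subset `I` of the simple roots. -/
def PhiI (S : RootSys V) (I : Finset V) : Set V :=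
  {α ∈ (S.Φ : Set V) | α ∈ Submodule.span ℤ (I : Set V)}

/-- `z` is a positive integer. -/
def IsPosInt (z : ℂ) : Prop := ∃ n : ℤ, 0 < n ∧ z = (n : ℂ)

/-- `z` is an integer. -/
def IsInt (z : ℂ) : Prop := ∃ n : ℤ, z = (n : ℂ)

/-- `Λ_I⁺ = {λ ∈ h* : ⟨λ, α^∨⟩ ∈ ℤ_{>0} for all α ∈ I}`. -/
def LambdaP (I : Set V) : Set (HStar V) :=
  {l | ∀ α ∈ I, IsPosInt (l (coroot α))}

/-- `Λ⁺(Φ'', Φ') = {ν ∈ ℂΦ' : ⟨ν, α^∨⟩ ∈ ℤ_{>0} for all α ∈ Φ'' ∩ Φ⁺}`. -/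
def LambdaPSub (S : RootSys V) (Φ'' Φ' : Set V) : Set (HStar V) :=
  {l | l ∈ Submodule.span ℂ (emb '' Φ') ∧
       ∀ α ∈ Φ'' ∩ (S.pos : Set V), IsPosInt (l (coroot α))}

/-- `λ` is `Φ''`-regular: `⟨λ, α⟩ ≠ 0` for all `α ∈ Φ''`. -/
def IsRegularOn (Φ'' : Set V) (l : HStar V) : Prop := ∀ α ∈ Φ'', l α ≠ 0

/-- `Ψ⁺(λ, Φ'', Φ') = {β ∈ (Φ' ∩ Φ⁺) \ Φ'' : ⟨λ, β^∨⟩ ∈ ℤ_{>0}}`. -/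
def PsiP (S : RootSys V) (Φ'' Φ' : Set V) (l : HStar V) : Set V :=
  {β | β ∈ Φ' ∩ (S.pos : Set V) ∧ β ∉ Φ'' ∧ IsPosInt (l (coroot β))}

/-- `Ψ⁺⁺(λ, Φ'', Φ') = {β ∈ Ψ⁺(λ, Φ'', Φ') : s_β λ is Φ''-regular}`. -/
def PsiPP (S : RootSys V) (Φ'' Φ' : Set V) (l : HStar V) : Set V :=
  {β ∈ PsiP S Φ'' Φ' l | ∀ α ∈ Φ'', (sRefl β l) α ≠ 0}

/-- The sign function: `sgn(λ, μ) = (-1)^{ℓ(w)}` if `λ, μ` are `Φ''`-regular and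
`μ = wλ` for some `w ∈ W(Φ'')`, and `0` otherwise. -/
def sgnW (S : RootSys V) (Φ'' : Set V) (l m : HStar V) : ℤ :=
  if h : IsRegularOn Φ'' l ∧ IsRegularOn Φ'' m ∧ ∃ w, w ∈ weyl Φ'' ∧ m = wAct w l
  then (-1) ^ len S h.2.2.choose else 0

/-- The Jantzen coefficient `c(λ, μ, Φ'', Φ') = Σ_{β ∈ Ψ⁺⁺(λ,Φ'',Φ')} sgn(s_β λ, μ)`. -/
def jc (S : RootSys V) (Φ'' Φ' : Set V) (l m : HStar V) : ℤ :=
  ∑ᶠ β ∈ PsiPP S Φ'' Φ' l, sgnW S Φ'' (sRefl β l) m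

/-- The symmetrized Jantzen coefficient `c̃(λ, μ, Φ'', Φ')`. -/
def jcSym (S : RootSys V) (Φ'' Φ' : Set V) (l m : HStar V) : ℤ :=
  jc S Φ'' Φ' l m + jc S Φ'' Φ' m l

/-- `θ(λ) = Σ_{w ∈ W_I} (-1)^{ℓ(w)} e^{wλ}` in the free `ℤ`-module on `h*`. -/
def theta (S : RootSys V) (I : Finset V) (l : HStar V) : HStar V →₀ ℤ :=
  ∑ᶠ w ∈ (weyl (PhiI S I) : Set (V ≃ₗ[ℝ] V)),
    Finsupp.single (wAct w l) ((-1) ^ len S w)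

/-- `Φ_λ = {α ∈ Φ : ⟨λ, α⟩ = 0}`. -/
def singSet (S : RootSys V) (l : HStar V) : Set V :=
  {α ∈ (S.Φ : Set V) | l α = 0}

/-- `Φ_{[λ]} = {α ∈ Φ : ⟨λ, α^∨⟩ ∈ ℤ}`. -/
def integralSet (S : RootSys V) (l : HStar V) : Set V :=
  {α ∈ (S.Φ : Set V) | IsInt (l (coroot α))}

/-- `(ℚ A) ∩ Φ`, the intersection of the rational span of `A` with `Φ`.
Taking `A = Φ_I ∪ {β}` gives `Φ_{β,1}`; taking `A = Φ_λ ∪ {β}` gives `Φ_{β,2}`. -/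
def ratSpanRoots (S : RootSys V) (A : Set V) : Set V :=
  {γ ∈ (S.Φ : Set V) | ∃ (t : Finset V) (c : V → ℚ),
    (t : Set V) ⊆ A ∧ γ = ∑ α ∈ t, (c α : ℝ) • α}

/-- `Φ_{β,0}`, the irreducible component of `Φ` containing `β`. -/
def component (S : RootSys V) (β : V) : Set V :=
  {γ ∈ (S.Φ : Set V) |
    Relation.ReflTransGen
      (fun x y => x ∈ (S.Φ : Set V) ∧ y ∈ (S.Φ : Set V) ∧ ⟪x, y⟫ ≠ 0) β γ}

/-- `λ|_{Φ'}`: the unique element of `ℂΦ'` with `⟨λ|_{Φ'}, α^∨⟩ = ⟨λ, α^∨⟩`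
for all `α ∈ Φ'`. -/
def restrictW (Φ' : Set V) (l : HStar V) : HStar V :=
  letI : Nonempty (HStar V) := ⟨0⟩
  Classical.epsilon fun m =>
    m ∈ Submodule.span ℂ (emb '' Φ') ∧ ∀ α ∈ Φ', m (coroot α) = l (coroot α)

/-- `ᴵWᴶ = {w ∈ W : ℓ(uwv) = ℓ(u) + ℓ(w) + ℓ(v) for all u ∈ W_I, v ∈ W_J}`. -/
def doubleCoset (S : RootSys V) (I J : Finset V) : Set (V ≃ₗ[ℝ] V) :=
  {w | w ∈ weyl (S.Φ : Set V) ∧ ∀ u ∈ weyl (PhiI S I), ∀ v ∈ weyl (PhiI S J),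
    len S (u * w * v) = len S u + len S w + len S v}

/-- The fundamental weight `ϖ_j` relative to an enumeration `e` of the simple roots:
the unique element of `h*` with `⟨ϖ_j, α_k^∨⟩ = δ_{jk}`. -/
def fundWeight {n : ℕ} (e : Fin n → V) (j : Fin n) : HStar V :=
  letI : Nonempty (HStar V) := ⟨0⟩
  Classical.epsilon fun m => ∀ k : Fin n, m (coroot (e k)) = if k = j then 1 else 0

/-- The labels of the irreducible Dynkin types. -/
inductive LieType | A | B | C | D | E | F | G
deriving DecidableEq

/-- The Cartan matrix of type `A_n` (1-based indices): entry `(i,j)` is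
`⟨α_i, α_j^∨⟩`. -/
def cartanA (i j : ℕ) : ℤ :=
  if i = j then 2 else if i + 1 = j ∨ j + 1 = i then -1 else 0

/-- The Cartan matrices of the irreducible types in the standard (Bourbaki/Humphreys)
numbering of the Dynkin diagram: `cartanEntry t n i j = ⟨α_i, α_j^∨⟩` (1-based). -/
def cartanEntry : LieType → ℕ → ℕ → ℕ → ℤ
  | .A, _, i, j => cartanA i j
  | .B, n, i, j => if i + 1 = n ∧ j = n then -2 else cartanA i j
  | .C, n, i, j => if i = n ∧ j + 1 = n then -2 else cartanA i j
  | .D, n, i, j =>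
      if i = j then 2
      else if (i + 2 = n ∧ j = n) ∨ (i = n ∧ j + 2 = n) then -1
      else if (i + 1 = n ∧ j = n) ∨ (i = n ∧ j + 1 = n) then 0
      else cartanA i j
  | .E, _, i, j =>
      if i = j then 2
      else if (i = 1 ∧ j = 3) ∨ (i = 3 ∧ j = 1) ∨ (i = 2 ∧ j = 4) ∨ (i = 4 ∧ j = 2) then -1
      else if (i = 1 ∧ j = 2) ∨ (i = 2 ∧ j = 1) ∨ (i = 2 ∧ j = 3) ∨ (i = 3 ∧ j = 2) then 0
      else cartanA i j
  | .F, _, i, j => if i = 2 ∧ j = 3 then -2 else cartanA i j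
  | .G, _, i, j => if i = 2 ∧ j = 1 then -3 else cartanA i j

/-- The standard basis vector `e_k` (1-based index, junk `0` outside `1 ≤ k ≤ n`). -/
def stdE (n k : ℕ) : EuclideanSpace ℝ (Fin n) :=
  if h : 1 ≤ k ∧ k ≤ n then EuclideanSpace.single ⟨k - 1, by omega⟩ 1 else 0

/-- The labels `B`, `C`, `D` of the classical non-`A` types. -/
inductive BCD | B | C | D
deriving DecidableEq

/-- The root set of `B_n` / `C_n` / `D_n` in the standard realization. -/
def bcdRoots (t : BCD) (n : ℕ) : Set (EuclideanSpace ℝ (Fin n)) :=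
  {v | (∃ i j : ℕ, 1 ≤ i ∧ i < j ∧ j ≤ n ∧
          (v = stdE n i - stdE n j ∨ v = -(stdE n i - stdE n j) ∨
           v = stdE n i + stdE n j ∨ v = -(stdE n i + stdE n j))) ∨
       (match t with
        | .B => ∃ i : ℕ, 1 ≤ i ∧ i ≤ n ∧ (v = stdE n i ∨ v = -stdE n i)
        | .C => ∃ i : ℕ, 1 ≤ i ∧ i ≤ n ∧ (v = (2:ℝ) • stdE n i ∨ v = -((2:ℝ) • stdE n i))
        | .D => False)}

/-- The positive roots of `B_n` / `C_n` / `D_n` in the standard realization. -/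
def bcdPos (t : BCD) (n : ℕ) : Set (EuclideanSpace ℝ (Fin n)) :=
  {v | (∃ i j : ℕ, 1 ≤ i ∧ i < j ∧ j ≤ n ∧
          (v = stdE n i - stdE n j ∨ v = stdE n i + stdE n j)) ∨
       (match t with
        | .B => ∃ i : ℕ, 1 ≤ i ∧ i ≤ n ∧ v = stdE n i
        | .C => ∃ i : ℕ, 1 ≤ i ∧ i ≤ n ∧ v = (2:ℝ) • stdE n i
        | .D => False)}

/-- The simple roots of `B_n` / `C_n` / `D_n` in the standard realization. -/
def bcdSimple (t : BCD) (n : ℕ) : Set (EuclideanSpace ℝ (Fin n)) :=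
  {v | (∃ i : ℕ, 1 ≤ i ∧ i < n ∧ v = stdE n i - stdE n (i + 1)) ∨
       (match t with
        | .B => v = stdE n n
        | .C => v = (2:ℝ) • stdE n n
        | .D => v = stdE n (n - 1) + stdE n n)}

/-- The simple root `α_k` of `B_n` / `C_n` / `D_n` (1-based index `k`). -/
def bcdAlpha (t : BCD) (n k : ℕ) : EuclideanSpace ℝ (Fin n) :=
  if k < n then stdE n k - stdE n (k + 1)
  else match t with
  | .B => stdE n n
  | .C => (2:ℝ) • stdE n n
  | .D => stdE n (n - 1) + stdE n n

/-!
Because `W_I` acts freely on strictly dominant weights, the nonzero terms of `c(λ, μ)` are the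
signs `(-1)^{ℓ(u)}` attached to the pairs `(u, β)` that satisfy `μ = u s_β λ`, where `u ∈ W_I`,
`β ∈ Φ⁺ \ Φ_I` and `⟨λ, β^∨⟩` is a positive integer. The map `(u, β) ↦ (u⁻¹, -uβ)` identifies the
pairs indexing `c(μ, λ)` with the pairs of the same kind for `c(λ, μ)` whose root `β` is negative,
since `u` permutes `Φ⁺ \ Φ_I`. Hence `c̃(λ, μ)` is a sum over all pairs with `β ∈ Φ \ Φ_I`,
in which the positive system enters only through the length on `W_I`.

Conjugation `(u, β) ↦ (w u w⁻¹, w β)` carries these pairs to those of `(wλ, wμ)`, for any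
automorphism `w` of `Φ` with `w Φ_I = Φ_J`. It preserves the length because the inversions of `u`
lie in `Φ_I ∩ Φ⁺`, which `w` maps onto `Φ_J ∩ Φ⁺`.
-/

open Submodule
open scoped Pointwise

section Isometries

omit [FiniteDimensional ℝ V]

lemma inner_coroot (α v : V) : ⟪v, coroot α⟫ = 2 / ⟪α, α⟫ * ⟪v, α⟫ :=
  real_inner_smul_right v α _

lemma coroot_neg (α : V) : coroot (-α) = -coroot α := by
  simp only [coroot, inner_neg_neg, smul_neg]

variable (V) in
/-- The orthogonal group of `V`, as a subgroup of the linear automorphisms, so that it can be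
compared with `weyl`. -/
def orthogonalGroup : Subgroup (V ≃ₗ[ℝ] V) where
  carrier := {u | ∀ x y, ⟪u x, u y⟫ = ⟪x, y⟫}
  one_mem' _ _ := rfl
  mul_mem' hu hv x y := (hu _ _).trans (hv x y)
  inv_mem' {u} hu x y := by
    simpa only [LinearEquiv.coe_inv, LinearEquiv.apply_symm_apply] using (hu (u⁻¹ x) (u⁻¹ y)).symm

variable {u : V ≃ₗ[ℝ] V}

lemma inner_map_map (hu : u ∈ orthogonalGroup V) (x y : V) : ⟪u x, u y⟫ = ⟪x, y⟫ := hu x y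

lemma inner_inv_left (hu : u ∈ orthogonalGroup V) (x y : V) : ⟪u⁻¹ x, y⟫ = ⟪x, u y⟫ := by
  rw [← inner_map_map hu, LinearEquiv.coe_inv, LinearEquiv.apply_symm_apply]

lemma coroot_map (hu : u ∈ orthogonalGroup V) (α : V) : coroot (u α) = u (coroot α) := by
  rw [coroot, coroot, inner_map_map hu, map_smul]

lemma wAct_apply (u : V ≃ₗ[ℝ] V) (l : HStar V) (v : V) : wAct u l v = l (u⁻¹ v) := rfl

lemma wAct_one (l : HStar V) : wAct 1 l = l := rfl

lemma wAct_mul (u v : V ≃ₗ[ℝ] V) (l : HStar V) : wAct (u * v) l = wAct u (wAct v l) := rfl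

lemma wAct_apply_map (u : V ≃ₗ[ℝ] V) (l : HStar V) (v : V) : wAct u l (u v) = l v := by
  rw [wAct_apply, LinearEquiv.coe_inv, LinearEquiv.symm_apply_apply]

lemma wAct_inv_eq_iff {l m : HStar V} : wAct u⁻¹ m = l ↔ m = wAct u l := by
  constructor
  · rintro rfl
    rw [← wAct_mul, mul_inv_cancel, wAct_one]
  · rintro rfl
    rw [← wAct_mul, inv_mul_cancel, wAct_one]

lemma wAct_injective (u : V ≃ₗ[ℝ] V) : Function.Injective (wAct u) := fun l m h => by
  rw [← wAct_inv_eq_iff.mpr h, wAct_inv_eq_iff.mpr rfl]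

lemma wAct_coroot (hu : u ∈ orthogonalGroup V) (l : HStar V) (β : V) :
    wAct u l (coroot (u β)) = l (coroot β) := by
  rw [coroot_map hu, wAct_apply_map]

lemma wAct_emb (hu : u ∈ orthogonalGroup V) (β : V) : wAct u (emb β) = emb (u β) := by
  ext v
  simp only [wAct_apply, emb, LinearMap.coe_mk, AddHom.coe_mk, real_inner_comm (u⁻¹ v),
    inner_inv_left hu, real_inner_comm]

lemma sRefl_neg (β : V) (l : HStar V) : sRefl (-β) l = sRefl β l := by
  ext v
  simp [sRefl, coroot_neg, emb, sub_eq_add_neg]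

lemma sRefl_map (hu : u ∈ orthogonalGroup V) (β : V) (l : HStar V) :
    sRefl (u β) (wAct u l) = wAct u (sRefl β l) := by
  rw [sRefl, wAct_coroot hu, ← wAct_emb hu]
  rfl

end Isometries

section Reflections

lemma reflV_apply (α v : V) : reflV α v = v - ⟪v, coroot α⟫ • α := by
  rw [reflV]
  split_ifs with h
  · simp [inner_self_eq_zero.mp h]
  · simp [Module.reflection_apply, corootForm]

lemma reflV_eq_reflection (α : V) : reflV α = (ℝ ∙ α)ᗮ.reflection.toLinearEquiv := by
  ext v
  rw [LinearIsometryEquiv.coe_toLinearEquiv, reflection_orthogonal_apply,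
    reflection_singleton_apply, reflV_apply, inner_coroot, real_inner_self_eq_norm_sq,
    real_inner_comm]
  simp only [RCLike.ofReal_real_eq_id, id_eq]
  module

lemma reflV_self (α : V) : reflV α α = -α := by
  simp only [reflV_eq_reflection, LinearIsometryEquiv.coe_toLinearEquiv,
    reflection_orthogonalComplement_singleton_eq_neg]

lemma reflV_mul_self (α : V) : reflV α * reflV α = 1 := by
  ext v
  simp only [LinearEquiv.mul_apply, reflV_eq_reflection, LinearIsometryEquiv.coe_toLinearEquiv,
    reflection_reflection, LinearEquiv.coe_one, id_eq]

lemma reflV_inv (α : V) : (reflV α)⁻¹ = reflV α :=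
  inv_eq_of_mul_eq_one_left (reflV_mul_self α)

lemma reflV_neg (α : V) : reflV (-α) = reflV α := by
  ext v
  simp only [reflV_apply, coroot_neg, inner_neg_right, neg_smul_neg]

lemma reflV_mem_orthogonalGroup (α : V) : reflV α ∈ orthogonalGroup V := fun x y => by
  rw [reflV_eq_reflection]
  exact LinearIsometryEquiv.inner_map_map _ x y

lemma reflV_map {u : V ≃ₗ[ℝ] V} (hu : u ∈ orthogonalGroup V) (α : V) :
    reflV (u α) = u * reflV α * u⁻¹ := by
  ext v
  simp only [LinearEquiv.mul_apply, reflV_apply, map_sub, map_smul, coroot_map hu,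
    inner_inv_left hu]
  simp only [LinearEquiv.coe_inv, LinearEquiv.apply_symm_apply]

lemma sRefl_eq_wAct (β : V) (l : HStar V) : sRefl β l = wAct (reflV β) l := by
  ext v
  rw [wAct_apply, reflV_inv, reflV_apply, map_sub, map_smul, Complex.real_smul, inner_coroot]
  simp only [sRefl, coroot, emb, LinearMap.sub_apply, LinearMap.smul_apply, LinearMap.coe_mk,
    AddHom.coe_mk, map_smul, Complex.real_smul, smul_eq_mul, real_inner_comm]
  push_cast
  ring

lemma sRefl_sRefl (β : V) (l : HStar V) : sRefl β (sRefl β l) = l := by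
  rw [sRefl_eq_wAct, sRefl_eq_wAct, ← wAct_mul, reflV_mul_self, wAct_one]

lemma sRefl_coroot (β : V) (l : HStar V) : sRefl β l (coroot β) = -l (coroot β) := by
  rw [sRefl_eq_wAct, wAct_apply, reflV_inv, ← coroot_map (reflV_mem_orthogonalGroup β),
    reflV_self, coroot_neg, map_neg]

end Reflections

section WeylGroup

variable {A B : Set V} {u w : V ≃ₗ[ℝ] V}

lemma reflV_mem_weyl {α : V} (hα : α ∈ A) : reflV α ∈ weyl A :=
  Subgroup.subset_closure ⟨α, hα, rfl⟩

lemma weyl_le {H : Subgroup (V ≃ₗ[ℝ] V)} : weyl A ≤ H ↔ ∀ α ∈ A, reflV α ∈ H := by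
  rw [weyl, Subgroup.closure_le]
  exact ⟨fun h α hα => h ⟨α, hα, rfl⟩, fun h _ ⟨α, hα, hu⟩ => hu ▸ h α hα⟩

lemma weyl_mono (h : A ⊆ B) : weyl A ≤ weyl B :=
  weyl_le.mpr fun _ hα => reflV_mem_weyl (h hα)

lemma weyl_le_orthogonalGroup (A : Set V) : weyl A ≤ orthogonalGroup V :=
  weyl_le.mpr fun α _ => reflV_mem_orthogonalGroup α

lemma weyl_le_stabilizer (h : ∀ α ∈ A, ∀ β ∈ B, reflV α β ∈ B) :
    weyl A ≤ MulAction.stabilizer (V ≃ₗ[ℝ] V) B :=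
  weyl_le.mpr fun α hα => MulAction.mem_stabilizer_set.mpr fun β =>
    ⟨fun hβ => by
      have := h α hα _ hβ
      rwa [LinearEquiv.smul_def, ← LinearEquiv.mul_apply, reflV_mul_self] at this, h α hα β⟩

lemma weyl_image (hw : w ∈ orthogonalGroup V) (A : Set V) :
    weyl (w '' A) = (weyl A).map (MulAut.conj w).toMonoidHom := by
  rw [weyl, weyl, MonoidHom.map_closure]
  congr 1
  ext v
  simp only [Set.mem_ofPred_eq, Set.mem_image, MulEquiv.coe_toMonoidHom, MulAut.conj_apply]
  constructor
  · rintro ⟨_, ⟨α, hα, rfl⟩, rfl⟩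
    exact ⟨reflV α, ⟨α, hα, rfl⟩, (reflV_map hw α).symm⟩
  · rintro ⟨_, ⟨α, hα, rfl⟩, rfl⟩
    exact ⟨w α, ⟨α, hα, rfl⟩, (reflV_map hw α).symm⟩

lemma conj_mem_weyl_image_iff (hw : w ∈ orthogonalGroup V) :
    MulAut.conj w u ∈ weyl (w '' A) ↔ u ∈ weyl A := by
  rw [weyl_image hw]
  exact Subgroup.mem_map_iff_mem (MulAut.conj w).injective

end WeylGroup

section RootSystem

variable {S : RootSys V} {I : Finset V} {u : V ≃ₗ[ℝ] V} {α β : V}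

namespace RootSys

lemma neg_mem (hβ : β ∈ S.Φ) : -β ∈ S.Φ := by
  simpa only [reflV_self] using S.refl_mem β hβ β hβ

lemma neg_mem_pos_iff (hβ : β ∈ S.Φ) : -β ∈ S.pos ↔ β ∉ S.pos :=
  ⟨fun h h' => S.not_both β h' h, (S.mem_pos_or β hβ).resolve_left⟩

/-- The automorphism group of the root system: the isometries of `V` that preserve `Φ`. -/
def aut (S : RootSys V) : Subgroup (V ≃ₗ[ℝ] V) :=
  orthogonalGroup V ⊓ MulAction.stabilizer (V ≃ₗ[ℝ] V) (S.Φ : Set V)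

lemma apply_mem_iff (hu : u ∈ S.aut) : u β ∈ S.Φ ↔ β ∈ S.Φ :=
  MulAction.mem_stabilizer_set.mp hu.2 β

lemma weyl_le_aut (S : RootSys V) : weyl (S.Φ : Set V) ≤ S.aut :=
  le_inf (weyl_le_orthogonalGroup _) (weyl_le_stabilizer S.refl_mem)

end RootSys

lemma PhiI_subset (S : RootSys V) (I : Finset V) : PhiI S I ⊆ S.Φ := fun _ h => h.1

lemma subset_PhiI (hI : I ⊆ S.Δ) : (I : Set V) ⊆ PhiI S I := fun _ ha =>
  ⟨S.pos_subset (S.simple_subset (hI ha)), subset_span ha⟩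

lemma neg_mem_PhiI (h : α ∈ PhiI S I) : -α ∈ PhiI S I :=
  ⟨S.neg_mem h.1, neg_mem h.2⟩

lemma neg_mem_PhiI_iff : -α ∈ PhiI S I ↔ α ∈ PhiI S I :=
  ⟨fun h => neg_neg α ▸ neg_mem_PhiI h, neg_mem_PhiI⟩

lemma reflV_mem_PhiI (hα : α ∈ PhiI S I) (hβ : β ∈ PhiI S I) : reflV α β ∈ PhiI S I := by
  refine ⟨S.refl_mem α hα.1 β hβ.1, ?_⟩
  obtain ⟨n, hn⟩ := S.crystallographic α hα.1 β hβ.1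
  rw [reflV_apply, hn, Int.cast_smul_eq_zsmul]
  exact sub_mem hβ.2 (smul_mem _ n hα.2)

lemma apply_mem_PhiI_iff (hu : u ∈ weyl (PhiI S I)) : u β ∈ PhiI S I ↔ β ∈ PhiI S I :=
  MulAction.mem_stabilizer_set.mp
    (weyl_le_stabilizer (fun _ hα _ hβ => reflV_mem_PhiI hα hβ) hu) β

lemma weyl_PhiI_le_aut (S : RootSys V) (I : Finset V) : weyl (PhiI S I) ≤ S.aut :=
  (weyl_mono (PhiI_subset S I)).trans S.weyl_le_aut

end RootSystem

section SimpleRoots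

variable {S : RootSys V} {I : Finset V} {β : V}

namespace RootSys

lemma top_le_span_simple (S : RootSys V) :
    ⊤ ≤ span ℝ (Set.range fun x : {a : V // a ∈ S.Δ} => x.1) := by
  have hpos : ∀ β ∈ S.pos, β ∈ span ℝ (Set.range fun x : {a : V // a ∈ S.Δ} => x.1) := by
    intro β hβ
    obtain ⟨c, -, rfl⟩ := S.simple_gen β hβ
    exact sum_mem fun a ha => smul_mem _ _ (subset_span ⟨⟨a, ha⟩, rfl⟩)
  rw [← S.span_eq_top, span_le]
  intro α hα
  rcases S.mem_pos_or α hα with h | h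
  · exact hpos α h
  · exact neg_mem_iff.mp (hpos _ h)

/-- The simple roots as a basis of `V`. -/
def simpleBasis (S : RootSys V) : Module.Basis {a : V // a ∈ S.Δ} ℝ V :=
  Module.Basis.mk S.simple_indep S.top_le_span_simple

lemma simpleBasis_apply (δ : {a : V // a ∈ S.Δ}) : S.simpleBasis δ = δ :=
  Module.Basis.mk_apply ..

lemma simpleBasis_repr_simple {a : V} (ha : a ∈ S.Δ) :
    S.simpleBasis.repr a = Finsupp.single ⟨a, ha⟩ 1 := by
  rw [← S.simpleBasis.repr_self, simpleBasis_apply]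

lemma simpleBasis_repr_sum (hI : I ⊆ S.Δ) (c : V → ℝ) {a : V} (ha : a ∈ I) :
    S.simpleBasis.repr (∑ b ∈ I, c b • b) ⟨a, hI ha⟩ = c a := by
  rw [map_sum, Finsupp.finsetSum_apply, Finset.sum_eq_single_of_mem a ha]
  · simp [simpleBasis_repr_simple (hI ha)]
  · intro b hb hba
    simp [simpleBasis_repr_simple (hI hb), hba]

lemma simpleBasis_repr_nonneg (hβ : β ∈ S.pos) (δ : {a : V // a ∈ S.Δ}) :
    0 ≤ S.simpleBasis.repr β δ := by
  obtain ⟨c, hc, rfl⟩ := S.simple_gen β hβ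
  rw [simpleBasis_repr_sum subset_rfl c δ.2]
  exact hc δ δ.2

lemma mem_pos_of_simpleBasis_repr_pos (hβ : β ∈ S.Φ) {δ : {a : V // a ∈ S.Δ}}
    (h : 0 < S.simpleBasis.repr β δ) : β ∈ S.pos := by
  by_contra hneg
  have := simpleBasis_repr_nonneg ((neg_mem_pos_iff hβ).mpr hneg) δ
  rw [map_neg, Finsupp.neg_apply] at this
  linarith

end RootSys

lemma exists_nonneg_sum_eq (hI : I ⊆ S.Δ) (hβ : β ∈ PhiI S I ∩ S.pos) :
    ∃ c : V → ℝ, (∀ a ∈ I, 0 ≤ c a) ∧ ∑ a ∈ I, c a • a = β := by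
  have hspan : β ∈ span ℝ (I : Set V) := span_subset_span ℤ ℝ _ hβ.1.2
  obtain ⟨c, -, hc⟩ := mem_span_finset.mp hspan
  refine ⟨c, fun a ha => ?_, hc⟩
  rw [← RootSys.simpleBasis_repr_sum hI c ha, hc]
  exact RootSys.simpleBasis_repr_nonneg hβ.2 _

lemma exists_simple_pos (hI : I ⊆ S.Δ) (hβ : β ∈ PhiI S I ∩ S.pos) {f : V →ₗ[ℝ] ℝ}
    (hf : 0 < f β) : ∃ a ∈ I, 0 < f a := by
  obtain ⟨c, hc, rfl⟩ := exists_nonneg_sum_eq hI hβ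
  by_contra! hneg
  refine hf.not_ge ?_
  rw [map_sum]
  refine Finset.sum_nonpos fun a ha => ?_
  rw [map_smul]
  exact smul_nonpos_of_nonneg_of_nonpos (hc a ha) (hneg a ha)

lemma pos_of_forall_simple_pos (hI : I ⊆ S.Δ) {f : V →ₗ[ℝ] ℝ} (hf : ∀ a ∈ I, 0 < f a)
    (hβ : β ∈ PhiI S I ∩ S.pos) : 0 < f β := by
  obtain ⟨c, hc, hsum⟩ := exists_nonneg_sum_eq hI hβ
  obtain ⟨a, ha, hca⟩ : ∃ a ∈ I, c a ≠ 0 := by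
    by_contra! hzero
    refine S.ne_zero β hβ.1.1 ?_
    rw [← hsum]
    exact Finset.sum_eq_zero fun a ha => by rw [hzero a ha, zero_smul]
  rw [← hsum, map_sum]
  simp only [map_smul, smul_eq_mul]
  exact Finset.sum_pos' (fun b hb => mul_nonneg (hc b hb) (hf b hb).le)
    ⟨a, ha, mul_pos ((hc a ha).lt_of_ne' hca) (hf a ha)⟩

lemma exists_ne_simpleBasis_repr_pos {a : V} (ha : a ∈ S.Δ) (hβ : β ∈ S.pos) (hne : β ≠ a) :
    ∃ δ : {a : V // a ∈ S.Δ}, δ ≠ ⟨a, ha⟩ ∧ 0 < S.simpleBasis.repr β δ := by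
  by_contra! hzero
  set c := S.simpleBasis.repr β ⟨a, ha⟩ with hc
  have hβa : β = c • a := by
    conv_lhs => rw [← S.simpleBasis.sum_repr β]
    rw [Finset.sum_eq_single_of_mem ⟨a, ha⟩ (Finset.mem_univ _), RootSys.simpleBasis_apply]
    intro δ _ hδ
    rw [(hzero δ hδ).antisymm (RootSys.simpleBasis_repr_nonneg hβ δ), zero_smul]
  have ha' : a ∈ S.pos := S.simple_subset ha
  rcases S.reduced a (S.pos_subset ha') c (hβa ▸ S.pos_subset hβ) with h | h
  · exact hne (by rw [hβa, h, one_smul])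
  · exact S.not_both a ha' (by rwa [hβa, h, neg_one_smul] at hβ)

lemma reflV_simple_mem_pos {a : V} (ha : a ∈ S.Δ) (hβ : β ∈ S.pos) (hne : β ≠ a) :
    reflV a β ∈ S.pos := by
  obtain ⟨δ, hδ, hpos⟩ := exists_ne_simpleBasis_repr_pos ha hβ hne
  have hmem : reflV a β ∈ S.Φ :=
    S.refl_mem a (S.pos_subset (S.simple_subset ha)) β (S.pos_subset hβ)
  refine RootSys.mem_pos_of_simpleBasis_repr_pos hmem (δ := δ) ?_
  rwa [reflV_apply, map_sub, map_smul, RootSys.simpleBasis_repr_simple ha, Finsupp.sub_apply,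
    Finsupp.smul_apply, Finsupp.single_eq_of_ne hδ, smul_zero, sub_zero]

lemma sumCoords_reflV_simple_lt {a : V} (ha : a ∈ S.Δ) (h : 0 < ⟪β, a⟫) :
    S.simpleBasis.sumCoords (reflV a β) < S.simpleBasis.sumCoords β := by
  have ha' : 0 < ⟪a, a⟫ :=
    real_inner_self_pos.mpr (S.ne_zero a (S.pos_subset (S.simple_subset ha)))
  have hone : S.simpleBasis.sumCoords a = 1 := by
    simpa only [RootSys.simpleBasis_apply] using S.simpleBasis.sumCoords_self_apply ⟨a, ha⟩
  rw [reflV_apply, map_sub, map_smul, hone, inner_coroot, smul_eq_mul, mul_one]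
  linarith [mul_pos (div_pos two_pos ha') h]

lemma reflV_mem_weyl_simple (hI : I ⊆ S.Δ) (hβ : β ∈ PhiI S I ∩ S.pos) :
    reflV β ∈ weyl (I : Set V) := by
  by_contra hnot
  obtain ⟨γ, ⟨hγ, hγnot⟩, hmin⟩ := Set.exists_min_image
    {γ | γ ∈ PhiI S I ∩ S.pos ∧ reflV γ ∉ weyl (I : Set V)} S.simpleBasis.sumCoords
    (S.pos.finite_toSet.subset fun γ h => h.1.2) ⟨β, hβ, hnot⟩
  obtain ⟨a, ha, hinner⟩ := exists_simple_pos hI hγ (f := innerₗ V γ)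
    (real_inner_self_pos.mpr (S.ne_zero γ hγ.1.1))
  have hne : γ ≠ a := fun h => hγnot (h ▸ reflV_mem_weyl ha)
  have hmem : reflV a γ ∈ PhiI S I ∩ S.pos :=
    ⟨reflV_mem_PhiI (subset_PhiI hI ha) hγ.1, reflV_simple_mem_pos (hI ha) hγ.2 hne⟩
  have hweyl : reflV (reflV a γ) ∈ weyl (I : Set V) := by
    by_contra h
    exact (sumCoords_reflV_simple_lt (hI ha) hinner).not_ge (hmin _ ⟨hmem, h⟩)
  rw [reflV_map (reflV_mem_orthogonalGroup a)] at hweyl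
  have ha' := reflV_mem_weyl (A := (I : Set V)) ha
  exact hγnot <| ((Subgroup.mul_mem_cancel_left _ ha').mp
    ((Subgroup.mul_mem_cancel_right _ (inv_mem ha')).mp hweyl))

lemma weyl_PhiI_eq (hI : I ⊆ S.Δ) : weyl (PhiI S I) = weyl (I : Set V) := by
  refine le_antisymm (weyl_le.mpr fun α hα => ?_) (weyl_mono (subset_PhiI hI))
  rcases S.mem_pos_or α hα.1 with h | h
  · exact reflV_mem_weyl_simple hI ⟨hα, h⟩
  · exact reflV_neg α ▸ reflV_mem_weyl_simple hI ⟨neg_mem_PhiI hα, h⟩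

end SimpleRoots

section Words

variable {S : RootSys V} {I : Finset V} {u : V ≃ₗ[ℝ] V} {β : V}

lemma mem_weyl_iff_exists_list {A : Set V} :
    u ∈ weyl A ↔ ∃ L : List V, (∀ a ∈ L, a ∈ A) ∧ (L.map reflV).prod = u := by
  constructor
  · intro hu
    induction hu using Subgroup.closure_induction_left with
    | one => exact ⟨[], by simp, rfl⟩
    | mul_left x hx y hy ih =>
      obtain ⟨⟨α, hα, rfl⟩, L, hL, rfl⟩ := And.intro hx ih
      exact ⟨α :: L, List.forall_mem_cons.mpr ⟨hα, hL⟩, by simp⟩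
    | inv_mul_cancel x hx y hy ih =>
      obtain ⟨⟨α, hα, rfl⟩, L, hL, rfl⟩ := And.intro hx ih
      exact ⟨α :: L, List.forall_mem_cons.mpr ⟨hα, hL⟩, by simp [reflV_inv]⟩
  · rintro ⟨L, hL, rfl⟩
    exact Subgroup.list_prod_mem _ <| List.forall_mem_map.mpr fun a ha => reflV_mem_weyl (hL a ha)

lemma exists_sublist_prod_mul_reflV (hβ : β ∈ S.pos) :
    ∀ L : List V, (∀ a ∈ L, a ∈ S.Δ) → (L.map reflV).prod β ∉ S.pos →
      ∃ L' : List V, L'.Sublist L ∧ L'.length < L.length ∧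
        (L'.map reflV).prod = (L.map reflV).prod * reflV β
  | [], _, hneg => absurd hβ hneg
  | b :: L, hL, hneg => by
    obtain ⟨hb, hL⟩ := List.forall_mem_cons.mp hL
    rw [List.map_cons, List.prod_cons, LinearEquiv.mul_apply] at hneg
    simp only [List.map_cons, List.prod_cons, List.length_cons]
    set v := (L.map reflV).prod
    by_cases hvβ : v β ∈ S.pos
    · have hb_eq : v β = b := by
        by_contra hne
        exact hneg (reflV_simple_mem_pos hb hvβ hne)
      have hv_mem : v ∈ orthogonalGroup V :=
        weyl_le_orthogonalGroup _ (mem_weyl_iff_exists_list.mpr ⟨L, hL, rfl⟩)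
      refine ⟨L, List.sublist_cons_self b L, Nat.lt_succ_self _, ?_⟩
      rw [← hb_eq, reflV_map hv_mem, inv_mul_cancel_right, mul_assoc, reflV_mul_self, mul_one]
    · obtain ⟨L', hsub, hlen, hprod⟩ := exists_sublist_prod_mul_reflV hβ L hL hvβ
      refine ⟨b :: L', hsub.cons_cons b, Nat.succ_lt_succ hlen, ?_⟩
      rw [List.map_cons, List.prod_cons, hprod, mul_assoc]

lemma eq_one_of_forall_simple_mem_pos (hI : I ⊆ S.Δ) (hu : u ∈ weyl (I : Set V))
    (hpos : ∀ a ∈ I, u a ∈ S.pos) : u = 1 := by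
  obtain ⟨L, ⟨hL, rfl⟩, hmin⟩ := exists_minimalFor_of_wellFoundedLT
    (fun L : List V => (∀ a ∈ L, a ∈ (I : Set V)) ∧ (L.map reflV).prod = u) List.length
    (mem_weyl_iff_exists_list.mp hu)
  obtain rfl | ⟨L₀, a, rfl⟩ := L.eq_nil_or_concat'
  · rfl
  · rw [List.forall_mem_append, List.forall_mem_singleton] at hL
    have ha : a ∈ S.pos := S.simple_subset (hI hL.2)
    have hneg : (L₀.map reflV).prod a ∉ S.pos := fun h => by
      have := hpos a hL.2
      rw [List.map_append, List.prod_append, List.map_singleton, List.prod_singleton,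
        LinearEquiv.mul_apply, reflV_self, map_neg] at this
      exact S.not_both _ h this
    obtain ⟨L', hsub, hlen, hprod⟩ :=
      exists_sublist_prod_mul_reflV ha L₀ (fun b hb => hI (hL.1 b hb)) hneg
    have := hmin (j := L') ⟨fun b hb => hL.1 b (hsub.subset hb), by simp [hprod]⟩
    simp only [List.length_append, List.length_singleton] at this
    specialize this (by lia)
    lia

end Words

section Length

variable {S : RootSys V} {I : Finset V} {u : V ≃ₗ[ℝ] V} {β : V}

lemma apply_mem_pos_iff (hI : I ⊆ S.Δ) (hu : u ∈ weyl (PhiI S I)) (hβ : β ∉ PhiI S I) :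
    u β ∈ S.pos ↔ β ∈ S.pos := by
  have hstab : weyl (I : Set V) ≤
      MulAction.stabilizer (V ≃ₗ[ℝ] V) {γ | γ ∈ S.pos ∧ γ ∉ PhiI S I} :=
    weyl_le_stabilizer fun a ha γ ⟨hγ, hγI⟩ => by
      have haI := subset_PhiI hI ha
      refine ⟨reflV_simple_mem_pos (hI ha) hγ fun h => hγI (h ▸ haI), ?_⟩
      rwa [apply_mem_PhiI_iff (reflV_mem_weyl haI)]
  have hmem := MulAction.mem_stabilizer_set.mp (hstab (weyl_PhiI_eq hI ▸ hu)) β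
  have huβ : u β ∉ PhiI S I := mt (apply_mem_PhiI_iff hu).mp hβ
  exact ⟨fun h => (hmem.mp ⟨h, huβ⟩).1, fun h => (hmem.mpr ⟨h, hβ⟩).1⟩

lemma len_inv (hu : u ∈ S.aut) : len S u⁻¹ = len S u := by
  have himage : {β ∈ (S.pos : Set V) | u⁻¹ β ∉ (S.pos : Set V)} =
      (fun β => -u β) '' {β ∈ (S.pos : Set V) | u β ∉ (S.pos : Set V)} := by
    ext γ
    constructor
    · rintro ⟨hγ, hneg⟩
      have hmem : u⁻¹ γ ∈ S.Φ := (S.apply_mem_iff (inv_mem hu)).mpr (S.pos_subset hγ)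
      refine ⟨-u⁻¹ γ, ⟨(S.neg_mem_pos_iff hmem).mpr hneg, ?_⟩, ?_⟩
      · simpa using S.not_both γ hγ
      · simp
    · rintro ⟨β, ⟨hβ, hneg⟩, rfl⟩
      have hmem : u β ∈ S.Φ := (S.apply_mem_iff hu).mpr (S.pos_subset hβ)
      exact ⟨(S.neg_mem_pos_iff hmem).mpr hneg, by simpa using S.not_both β hβ⟩
  rw [len, himage]
  exact Set.ncard_image_of_injective _ (neg_injective.comp u.injective)

lemma len_eq_ncard (hI : I ⊆ S.Δ) (hu : u ∈ weyl (PhiI S I)) :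
    len S u = {β ∈ PhiI S I ∩ S.pos | u β ∉ S.pos}.ncard := by
  rw [len]
  congr 1
  ext β
  refine ⟨fun ⟨hβ, hneg⟩ => ⟨⟨?_, hβ⟩, hneg⟩, fun ⟨⟨_, hβ⟩, hneg⟩ => ⟨hβ, hneg⟩⟩
  by_contra hβI
  exact hneg ((apply_mem_pos_iff hI hu hβI).mpr hβ)

end Length

section Dominance

variable {S : RootSys V} {I : Finset V} {u v : V ≃ₗ[ℝ] V} {l m : HStar V} {α : V}

/-- The weights whose real part lies in the open dominant chamber of `W_I`, a condition weaker than
membership in `Λ_I⁺` that still makes `W_I` act freely on the orbit. Pairing with `a` rather than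
with its coroot only rescales by a positive factor. -/
def IsStrictlyDominant (I : Finset V) (l : HStar V) : Prop := ∀ a ∈ I, 0 < (l a).re

lemma isStrictlyDominant_of_mem_LambdaP (hI : I ⊆ S.Δ) (hl : l ∈ LambdaP (I : Set V)) :
    IsStrictlyDominant I l := by
  intro a ha
  obtain ⟨n, hn, hln⟩ := hl a ha
  have ha' : 0 < ⟪a, a⟫ :=
    real_inner_self_pos.mpr (S.ne_zero a (S.pos_subset (S.simple_subset (hI ha))))
  have hre : 2 / ⟪a, a⟫ * (l a).re = n := by
    rw [← Complex.re_ofReal_mul, ← Complex.real_smul, ← map_smul]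
    exact (congrArg Complex.re hln).trans (Complex.intCast_re n)
  exact pos_of_mul_pos_right (hre ▸ Int.cast_pos.mpr hn) (div_pos two_pos ha').le

namespace IsStrictlyDominant

lemma re_pos (hI : I ⊆ S.Δ) (hl : IsStrictlyDominant I l) (hα : α ∈ PhiI S I ∩ S.pos) :
    0 < (l α).re :=
  pos_of_forall_simple_pos hI (f := Complex.reLm ∘ₗ l) hl hα

lemma re_pos_iff (hI : I ⊆ S.Δ) (hl : IsStrictlyDominant I l) (hα : α ∈ PhiI S I) :
    0 < (l α).re ↔ α ∈ S.pos := by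
  refine ⟨fun h => ?_, fun h => hl.re_pos hI ⟨hα, h⟩⟩
  by_contra hneg
  have := hl.re_pos hI ⟨neg_mem_PhiI hα, (S.neg_mem_pos_iff hα.1).mpr hneg⟩
  rw [map_neg, Complex.neg_re] at this
  linarith

lemma isRegularOn (hI : I ⊆ S.Δ) (hl : IsStrictlyDominant I l) : IsRegularOn (PhiI S I) l := by
  intro α hα hzero
  rcases S.mem_pos_or α hα.1 with h | h
  · exact (hl.re_pos hI ⟨hα, h⟩).ne' (by simp [hzero])
  · exact (hl.re_pos hI ⟨neg_mem_PhiI hα, h⟩).ne' (by simp [hzero])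

lemma eq_one_of_wAct_eq_self (hI : I ⊆ S.Δ) (hl : IsStrictlyDominant I l)
    (hu : u ∈ weyl (PhiI S I)) (h : wAct u l = l) : u = 1 := by
  refine eq_one_of_forall_simple_mem_pos hI (weyl_PhiI_eq hI ▸ hu) fun a ha => ?_
  have haI := subset_PhiI hI ha
  rw [← hl.re_pos_iff hI ((apply_mem_PhiI_iff hu).mpr haI), ← h, wAct_apply_map]
  exact hl a ha

lemma eq_of_eq_wAct (hI : I ⊆ S.Δ) (hm : IsStrictlyDominant I m) (hu : u ∈ weyl (PhiI S I))
    (hv : v ∈ weyl (PhiI S I)) (hul : m = wAct u l) (hvl : m = wAct v l) : u = v := by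
  refine mul_inv_eq_one.mp (hm.eq_one_of_wAct_eq_self hI (mul_mem hu (inv_mem hv)) ?_)
  rw [wAct_mul, wAct_inv_eq_iff.mpr hvl, ← hul]

end IsStrictlyDominant

lemma isRegularOn_of_wAct (hu : u ∈ weyl (PhiI S I)) (h : IsRegularOn (PhiI S I) (wAct u l)) :
    IsRegularOn (PhiI S I) l := fun α hα => by
  rw [← wAct_apply_map u l]
  exact h _ ((apply_mem_PhiI_iff hu).mpr hα)

lemma sgnW_eq_neg_one_pow_len (hI : I ⊆ S.Δ) (hm : IsStrictlyDominant I m)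
    (hu : u ∈ weyl (PhiI S I)) (h : m = wAct u l) :
    sgnW S (PhiI S I) l m = (-1) ^ len S u := by
  have hreg := hm.isRegularOn hI
  have hex : IsRegularOn (PhiI S I) l ∧ IsRegularOn (PhiI S I) m ∧
      ∃ v, v ∈ weyl (PhiI S I) ∧ m = wAct v l :=
    ⟨isRegularOn_of_wAct hu (h ▸ hreg), hreg, u, hu, h⟩
  obtain ⟨hmem, heq⟩ := hex.2.2.choose_spec
  rw [sgnW, dif_pos hex, hm.eq_of_eq_wAct hI hmem hu heq h]

lemma exists_eq_wAct_of_sgnW_ne_zero {A : Set V} (h : sgnW S A l m ≠ 0) :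
    ∃ v ∈ weyl A, m = wAct v l := by
  rw [sgnW] at h
  split_ifs at h with hex
  · exact hex.2.2
  · exact absurd rfl h

end Dominance

section JantzenPairs

variable {S : RootSys V} {I : Finset V} {l m : HStar V} {p : (V ≃ₗ[ℝ] V) × V}

/-- The pairs `(u, β)` with `u ∈ W(A)` and `β ∈ Φ \ A` such that `⟨l, β^∨⟩` is a positive integer
and `m = u (s_β l)`. Those with `β` positive index the nonzero terms `(-1)^{ℓ(u)}` of `c(l, m)`;
dropping positivity yields an index set for `c̃(l, m)`. -/
def jantzenPairs (S : RootSys V) (A : Set V) (l m : HStar V) : Set ((V ≃ₗ[ℝ] V) × V) :=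
  {p | p.1 ∈ weyl A ∧ p.2 ∈ S.Φ ∧ p.2 ∉ A ∧ IsPosInt (l (coroot p.2)) ∧
    m = wAct p.1 (sRefl p.2 l)}

lemma injOn_snd_jantzenPairs (hI : I ⊆ S.Δ) (hm : IsStrictlyDominant I m) :
    Set.InjOn Prod.snd (jantzenPairs S (PhiI S I) l m) := by
  rintro ⟨u, β⟩ ⟨hu, -, -, -, hum⟩ ⟨v, _⟩ ⟨hv, -, -, -, hvm⟩ rfl
  exact Prod.ext (hm.eq_of_eq_wAct hI hu hv hum hvm) rfl

lemma finite_jantzenPairs (hI : I ⊆ S.Δ) (hm : IsStrictlyDominant I m) :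
    (jantzenPairs S (PhiI S I) l m).Finite :=
  Set.Finite.of_injOn (fun _ hp => hp.2.1) (injOn_snd_jantzenPairs hI hm) S.Φ.finite_toSet

lemma bijOn_snd_jantzenPairs (hI : I ⊆ S.Δ) (hm : IsStrictlyDominant I m) :
    Set.BijOn Prod.snd (jantzenPairs S (PhiI S I) l m ∩ {p | p.2 ∈ S.pos})
      (PsiPP S (PhiI S I) S.Φ l ∩
        Function.support fun β => sgnW S (PhiI S I) (sRefl β l) m) := by
  refine ⟨?_, (injOn_snd_jantzenPairs hI hm).mono Set.inter_subset_left, ?_⟩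
  · rintro ⟨u, β⟩ ⟨⟨hu, hβ, hβI, hint, hum⟩, hpos⟩
    refine ⟨⟨⟨⟨hβ, hpos⟩, hβI, hint⟩, ?_⟩, ?_⟩
    · exact isRegularOn_of_wAct hu (hum ▸ hm.isRegularOn hI)
    · rw [Function.mem_support, sgnW_eq_neg_one_pow_len hI hm hu hum]
      exact pow_ne_zero _ (by norm_num)
  · rintro β ⟨⟨⟨⟨hβ, hpos⟩, hβI, hint⟩, -⟩, hne⟩
    obtain ⟨u, hu, hum⟩ := exists_eq_wAct_of_sgnW_ne_zero hne
    exact ⟨(u, β), ⟨⟨hu, hβ, hβI, hint, hum⟩, hpos⟩, rfl⟩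

lemma jc_eq_finsum_jantzenPairs (hI : I ⊆ S.Δ) (hm : IsStrictlyDominant I m) :
    jc S (PhiI S I) S.Φ l m =
      ∑ᶠ p ∈ jantzenPairs S (PhiI S I) l m ∩ {p | p.2 ∈ S.pos}, (-1) ^ len S p.1 := by
  rw [jc, ← finsum_mem_inter_support]
  refine (finsum_mem_eq_of_bijOn Prod.snd (bijOn_snd_jantzenPairs hI hm) fun p hp => ?_).symm
  exact (sgnW_eq_neg_one_pow_len hI hm hp.1.1 hp.1.2.2.2.2).symm

/-- The flip `(u, β) ↦ (u⁻¹, -uβ)`, which exchanges the roles of the two weights of a pair in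
`jantzenPairs` because `m = u (s_β l)` is equivalent to `l = u⁻¹ (s_{uβ} m)`. -/
def pairFlip (p : (V ≃ₗ[ℝ] V) × V) : (V ≃ₗ[ℝ] V) × V := (p.1⁻¹, -p.1 p.2)

omit [FiniteDimensional ℝ V] in
lemma pairFlip_involutive : Function.Involutive (pairFlip (V := V)) := fun p => by
  simp [pairFlip]

lemma pairFlip_mem_jantzenPairs (hp : p ∈ jantzenPairs S (PhiI S I) l m) :
    pairFlip p ∈ jantzenPairs S (PhiI S I) m l := by
  obtain ⟨u, β⟩ := p
  obtain ⟨hu, hβ, hβI, hint, rfl⟩ := hp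
  have hu_orth := weyl_le_orthogonalGroup _ hu
  refine ⟨inv_mem hu, ?_, ?_, ?_, ?_⟩
  · exact S.neg_mem ((S.apply_mem_iff (weyl_PhiI_le_aut S I hu)).mpr hβ)
  · rwa [pairFlip, neg_mem_PhiI_iff, apply_mem_PhiI_iff hu]
  · rwa [pairFlip, coroot_neg, map_neg, wAct_coroot hu_orth, sRefl_coroot, neg_neg]
  · rw [pairFlip, sRefl_neg, sRefl_map hu_orth, sRefl_sRefl]
    exact (wAct_inv_eq_iff.mpr rfl).symm

lemma bijOn_pairFlip (hI : I ⊆ S.Δ) :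
    Set.BijOn pairFlip (jantzenPairs S (PhiI S I) l m \ {p | p.2 ∈ S.pos})
      (jantzenPairs S (PhiI S I) m l ∩ {p | p.2 ∈ S.pos}) := by
  refine pairFlip_involutive.toPerm.bijOn fun p => ?_
  have hmem : pairFlip p ∈ jantzenPairs S (PhiI S I) m l ↔ p ∈ jantzenPairs S (PhiI S I) l m :=
    ⟨fun h => pairFlip_involutive p ▸ pairFlip_mem_jantzenPairs h, pairFlip_mem_jantzenPairs⟩
  refine and_congr_right_iff.mpr (fun hp => ?_) |>.trans (and_congr_left' hmem)
  obtain ⟨hu, hβ, hβI, -⟩ := hmem.mp hp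
  have huβ := (S.apply_mem_iff (weyl_PhiI_le_aut S I hu)).mpr hβ
  exact (S.neg_mem_pos_iff huβ).trans (not_congr (apply_mem_pos_iff hI hu hβI))

lemma jcSym_eq_finsum_jantzenPairs (hI : I ⊆ S.Δ) (hl : IsStrictlyDominant I l)
    (hm : IsStrictlyDominant I m) :
    jcSym S (PhiI S I) S.Φ l m = ∑ᶠ p ∈ jantzenPairs S (PhiI S I) l m, (-1) ^ len S p.1 := by
  rw [jcSym, jc_eq_finsum_jantzenPairs hI hm, jc_eq_finsum_jantzenPairs hI hl,
    ← finsum_mem_inter_add_sdiff {p | p.2 ∈ S.pos} (finite_jantzenPairs hI hm)]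
  congr 1
  refine (finsum_mem_eq_of_bijOn pairFlip (bijOn_pairFlip hI) fun p hp => ?_).symm
  rw [pairFlip, len_inv (weyl_PhiI_le_aut S I hp.1.1)]

end JantzenPairs

section Conjugation

variable {S : RootSys V} {I J : Finset V} {u w : V ≃ₗ[ℝ] V} {l m : HStar V}

lemma PhiI_eq_image (hwpos : PhiI S J ∩ S.pos = w '' (PhiI S I ∩ S.pos)) :
    PhiI S J = w '' PhiI S I := by
  ext γ
  constructor
  · intro hγ
    rcases S.mem_pos_or γ hγ.1 with h | h
    · obtain ⟨α, hα, rfl⟩ := hwpos.subset ⟨hγ, h⟩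
      exact ⟨α, hα.1, rfl⟩
    · obtain ⟨α, hα, hαγ⟩ := hwpos.subset ⟨neg_mem_PhiI hγ, h⟩
      exact ⟨-α, neg_mem_PhiI hα.1, by rw [map_neg, hαγ, neg_neg]⟩
  · rintro ⟨α, hα, rfl⟩
    rcases S.mem_pos_or α hα.1 with h | h
    · exact (hwpos.superset ⟨α, ⟨hα, h⟩, rfl⟩).1
    · rw [← neg_mem_PhiI_iff, ← map_neg]
      exact (hwpos.superset ⟨-α, ⟨neg_mem_PhiI hα, h⟩, rfl⟩).1

lemma IsStrictlyDominant.map (hI : I ⊆ S.Δ) (hJ : J ⊆ S.Δ)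
    (hwpos : PhiI S J ∩ S.pos = w '' (PhiI S I ∩ S.pos)) (hl : IsStrictlyDominant I l) :
    IsStrictlyDominant J (wAct w l) := by
  intro a ha
  obtain ⟨α, hα, rfl⟩ := hwpos.subset ⟨subset_PhiI hJ ha, S.simple_subset (hJ ha)⟩
  rw [wAct_apply_map]
  exact hl.re_pos hI hα

lemma len_conj (hI : I ⊆ S.Δ) (hJ : J ⊆ S.Δ) (hw : w ∈ orthogonalGroup V)
    (hwpos : PhiI S J ∩ S.pos = w '' (PhiI S I ∩ S.pos)) (hu : u ∈ weyl (PhiI S I)) :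
    len S (MulAut.conj w u) = len S u := by
  have hconj : MulAut.conj w u ∈ weyl (PhiI S J) := by
    rwa [PhiI_eq_image hwpos, conj_mem_weyl_image_iff hw]
  have hpos {α : V} (hα : α ∈ PhiI S I) : w α ∈ S.pos ↔ α ∈ S.pos := by
    have hwα : w α ∈ PhiI S J := PhiI_eq_image hwpos ▸ Set.mem_image_of_mem w hα
    have := Set.ext_iff.mp hwpos (w α)
    rw [w.injective.mem_set_image] at this
    exact (and_iff_right hwα).symm.trans (this.trans (and_iff_right hα))
  have himage : {γ ∈ PhiI S J ∩ S.pos | MulAut.conj w u γ ∉ S.pos} =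
      w '' {β ∈ PhiI S I ∩ S.pos | u β ∉ S.pos} := by
    rw [hwpos]
    ext γ
    constructor
    · rintro ⟨⟨β, hβ, rfl⟩, hneg⟩
      refine ⟨β, ⟨hβ, ?_⟩, rfl⟩
      simpa [hpos ((apply_mem_PhiI_iff hu).mpr hβ.1)] using hneg
    · rintro ⟨β, ⟨hβ, hneg⟩, rfl⟩
      refine ⟨⟨β, hβ, rfl⟩, ?_⟩
      simpa [hpos ((apply_mem_PhiI_iff hu).mpr hβ.1)] using hneg
  rw [len_eq_ncard hJ hconj, len_eq_ncard hI hu, himage,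
    Set.ncard_image_of_injective _ w.injective]

lemma bijOn_conj_jantzenPairs (hw : w ∈ S.aut) (A : Set V) :
    Set.BijOn (Prod.map (MulAut.conj w) w) (jantzenPairs S A l m)
      (jantzenPairs S (w '' A) (wAct w l) (wAct w m)) := by
  refine ((MulAut.conj w).toEquiv.prodCongr w.toEquiv).bijOn fun ⟨u, β⟩ => ?_
  have hweight : wAct w m = wAct (MulAut.conj w u) (sRefl (w β) (wAct w l)) ↔
      m = wAct u (sRefl β l) := by
    rw [sRefl_map hw.1, ← wAct_mul, MulAut.conj_apply, inv_mul_cancel_right, wAct_mul,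
      (wAct_injective w).eq_iff]
  exact and_congr (conj_mem_weyl_image_iff hw.1) <| and_congr (S.apply_mem_iff hw) <|
    and_congr (not_congr w.injective.mem_set_image) <|
      and_congr (iff_of_eq (congrArg IsPosInt (wAct_coroot hw.1 l β))) hweight

end Conjugation

theorem statement_10_general (S : RootSys V) (I J : Finset V) (hI : I ⊆ S.Δ) (hJ : J ⊆ S.Δ)
    (w : V ≃ₗ[ℝ] V) (hw : w ∈ S.aut)
    (hwpos : PhiI S J ∩ (S.pos : Set V) = w '' (PhiI S I ∩ (S.pos : Set V)))
    (lam mu : HStar V) (hlam : IsStrictlyDominant I lam) (hmu : IsStrictlyDominant I mu) :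
    jcSym S (PhiI S I) (S.Φ : Set V) lam mu =
      jcSym S (PhiI S J) (S.Φ : Set V) (wAct w lam) (wAct w mu) := by
  rw [jcSym_eq_finsum_jantzenPairs hI hlam hmu,
    jcSym_eq_finsum_jantzenPairs hJ (hlam.map hI hJ hwpos) (hmu.map hI hJ hwpos),
    PhiI_eq_image hwpos]
  refine finsum_mem_eq_of_bijOn _ (bijOn_conj_jantzenPairs hw _) fun p hp => ?_
  rw [Prod.map_fst, len_conj hI hJ hw.1 hwpos hp.1]

/-- Lemma 4.11 (Conjugate invariance): suppose `Φ_I` and `Φ_J` are `W`-conjugate and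
`w ∈ W` satisfies `Φ_J ∩ Φ⁺ = w (Φ_I ∩ Φ⁺)`.  Then for all `λ, μ ∈ Λ_I⁺`,
`c̃(λ, μ, Φ_I, Φ) = c̃(wλ, wμ, Φ_J, Φ)`. -/
theorem statement_10 {V : Type*} [NormedAddCommGroup V] [InnerProductSpace ℝ V]
    [FiniteDimensional ℝ V]
    (S : RootSys V) (I J : Finset V) (hI : I ⊆ S.Δ) (hJ : J ⊆ S.Δ)
    (hconj : ∃ u, u ∈ weyl (S.Φ : Set V) ∧
      PhiI S J = (fun v => u v) '' PhiI S I)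
    (w : V ≃ₗ[ℝ] V) (hw : w ∈ weyl (S.Φ : Set V))
    (hwpos : PhiI S J ∩ (S.pos : Set V) = (fun v => w v) '' (PhiI S I ∩ (S.pos : Set V)))
    (lam mu : HStar V) (hlam : lam ∈ LambdaP (I : Set V)) (hmu : mu ∈ LambdaP (I : Set V)) :
    jcSym S (PhiI S I) (S.Φ : Set V) lam mu =
      jcSym S (PhiI S J) (S.Φ : Set V) (wAct w lam) (wAct w mu) := by
  exact statement_10_general S I J hI hJ w (S.weyl_le_aut hw) hwpos lam mu
    (isStrictlyDominant_of_mem_LambdaP hI hlam) (isStrictlyDominant_of_mem_LambdaP hI hmu)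

end JantzenGVM
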